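/- Assume the loss has the form ℓ(w,x,y) = ℓ(f_w(x),y) with values in [0,1]. Then the standard expected generalization error gen = E[(1/n) Σ_{i=1}^n (ℓ(W,Z_i^{−U_i}) − ℓ(W,Z_i^{U_i}))] satisfies |gen| ≤ E_{Y'~P_Y}[E_{Z_{[2n]}}[(1/n^{Y'}) Σ_{i=1}^n sqrt(2·max(𝟙{Y_i^-=Y'}, 𝟙{Y_i^+=Y'})·I_{Z_{[2n]}}(f_W(X_i^±);U_i))]]. -/

import Mathlib

open MeasureTheory ProbabilityTheory
open scoped ENNReal

noncomputable section

open Classical in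
/-- Kullback–Leibler divergence: `∞` unless `μ ≪ ν` and the log-likelihood ratio is
`μ`-integrable. -/
def KL {α : Type*} [MeasurableSpace α] (μ ν : Measure α) : ℝ≥0∞ :=
  if μ ≪ ν ∧ Integrable (llr μ ν) μ then ENNReal.ofReal (∫ x, llr μ ν x ∂μ) else ∞

/-- Fair coin measure on `Bool` (the law of a uniform `{−1,+1}` selector, `true ↔ +1`). -/
def coin : Measure Bool :=
  (2 : ℝ≥0∞)⁻¹ • Measure.dirac true + (2 : ℝ≥0∞)⁻¹ • Measure.dirac false

/-- Disintegrated conditional mutual information `I_z(A;B)` given `Z = z`, defined through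
regular conditional distributions: `KL(P_{A,B|Z=z} ‖ P_{A|Z=z} ⊗ P_{B|Z=z})`. -/
def dCMI {Ω γ α β : Type*} [MeasurableSpace Ω] [MeasurableSpace γ]
    [MeasurableSpace α] [StandardBorelSpace α] [Nonempty α]
    [MeasurableSpace β] [StandardBorelSpace β] [Nonempty β]
    (μ : Measure Ω) [IsFiniteMeasure μ]
    (A : Ω → α) (B : Ω → β) (Z : Ω → γ) (z : γ) : ℝ≥0∞ :=
  KL (condDistrib (fun ω => (A ω, B ω)) Z μ z)
    ((condDistrib A Z μ z).prod (condDistrib B Z μ z))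

/-- The super-sample entry selected by `u`, i.e. `z^{u}` (the training sample):
`zz = (z⁻, z⁺)` and `u = true` means `+1`. -/
def trainSel {𝒵 : Type*} (zz : 𝒵 × 𝒵) (u : Bool) : 𝒵 := if u then zz.2 else zz.1

/-- The super-sample entry not selected by `u`, i.e. `z^{−u}` (the test sample). -/
def testSel {𝒵 : Type*} (zz : 𝒵 × 𝒵) (u : Bool) : 𝒵 := if u then zz.1 else zz.2

/-! Given `Z = z`, compare the joint law of the predictions and the selector `U_i` with the product
of their marginals. Swapping the two members of pair `i` makes the loss gap an odd function of
`U_i`, so its mean vanishes under the product law; being `[-1, 1]`-valued it is also sub-Gaussian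
there, and the Donsker–Varadhan formula bounds its mean under the joint law by `√(2 I_z)`. Splitting
the expectation over `Z` along the fibres `{Y_i⁻ = y}`, weighted by `1 / P(Y = y)`, and averaging
over `y ∼ P_Y` changes nothing, and the indicator of `Y_i⁻ = y` is at most the maximum in the
bound. -/

section KullbackLeibler

open InformationTheory

variable {α : Type*} [MeasurableSpace α] {μ ν : Measure α} [IsProbabilityMeasure μ]
  [IsProbabilityMeasure ν]

variable (μ ν) in
lemma KL_eq_klDiv : KL μ ν = klDiv μ ν := by
  by_cases h : μ ≪ ν ∧ Integrable (llr μ ν) μ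
  · simp [KL, klDiv_of_ac_of_integrable, h.1, h.2]
  · rw [KL, if_neg h, klDiv_eq_top_iff.2 fun hac hint => h ⟨hac, hint⟩]

/- Gibbs' inequality for `μ` against the exponential tilting `ν.tilted g`. -/
lemma integral_sub_log_integral_exp_le_toReal_klDiv {g : α → ℝ} (hg : Integrable g μ)
    (hexp : Integrable (fun x => Real.exp (g x)) ν) (h : klDiv μ ν ≠ ∞) :
    ∫ x, g x ∂μ - Real.log (∫ x, Real.exp (g x) ∂ν) ≤ (klDiv μ ν).toReal := by
  obtain ⟨hac, hint⟩ := klDiv_ne_top_iff.1 h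
  have : IsProbabilityMeasure (ν.tilted g) := isProbabilityMeasure_tilted hexp
  have gibbs := integral_llr_add_sub_measure_univ_nonneg
    (hac.trans (absolutelyContinuous_tilted hexp))
    (integrable_llr_tilted_right hac hg hint hexp)
  rw [integral_llr_tilted_right hac hg hexp hint, probReal_univ, probReal_univ] at gibbs
  rw [toReal_klDiv_of_measure_eq hac (by simp)]
  linarith

/- The Donsker–Varadhan bound `t m - c t² / 2 ≤ klDiv μ ν` holds for every `t`, so the quadratic
`c t² / 2 - m t + klDiv μ ν` has nonpositive discriminant. -/
lemma sq_integral_le_mul_toReal_klDiv_of_hasSubgaussianMGF {X : α → ℝ} {c : NNReal}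
    (hXν : HasSubgaussianMGF X c ν) (hXμ : Integrable X μ) (h : klDiv μ ν ≠ ∞) :
    (∫ x, X x ∂μ) ^ 2 ≤ 2 * c * (klDiv μ ν).toReal := by
  have quadratic_nonneg (t : ℝ) :
      0 ≤ c / 2 * (t * t) + (-∫ x, X x ∂μ) * t + (klDiv μ ν).toReal := by
    have variational := integral_sub_log_integral_exp_le_toReal_klDiv (hXμ.const_mul t)
      (hXν.integrable_exp_mul t) h
    have log_mgf_le : Real.log (∫ x, Real.exp (t * X x) ∂ν) ≤ c * t ^ 2 / 2 :=
      (Real.log_le_iff_le_exp (integral_exp_pos (hXν.integrable_exp_mul t))).2 (hXν.mgf_le t)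
    rw [integral_const_mul] at variational
    linarith
  have discrim_nonpos := discrim_le_zero quadratic_nonneg
  rw [discrim] at discrim_nonpos
  linarith

lemma ofReal_abs_integral_le_rpow_klDiv_of_mem_Icc {X : α → ℝ} {a b : ℝ} (hab : a < b)
    (hX : AEMeasurable X ν) (hXab : ∀ᵐ x ∂ν, X x ∈ Set.Icc a b) (hX0 : ∫ x, X x ∂ν = 0) :
    ENNReal.ofReal |∫ x, X x ∂μ| ≤
      (ENNReal.ofReal ((b - a) ^ 2 / 2) * klDiv μ ν) ^ (1 / 2 : ℝ) := by
  have hba : 0 < (b - a) ^ 2 / 2 := by have := sub_pos.2 hab; positivity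
  by_cases h : klDiv μ ν = ∞
  · simp [h, ENNReal.mul_top (ENNReal.ofReal_pos.2 hba).ne']
  have hac : μ ≪ ν := (klDiv_ne_top_iff.1 h).1
  have sq_le : (∫ x, X x ∂μ) ^ 2 ≤ (b - a) ^ 2 / 2 * (klDiv μ ν).toReal := by
    refine (sq_integral_le_mul_toReal_klDiv_of_hasSubgaussianMGF
      (hasSubgaussianMGF_of_mem_Icc_of_integral_eq_zero hX hXab hX0)
      (.of_mem_Icc a b (hX.mono_ac hac) (hac.ae_le hXab)) h).trans_eq ?_
    simp only [NNReal.coe_pow, NNReal.coe_div, coe_nnnorm, Real.norm_eq_abs, NNReal.coe_ofNat,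
      div_pow, sq_abs]
    ring
  rw [← ENNReal.ofReal_toReal h, ← ENNReal.ofReal_mul hba.le,
    ENNReal.ofReal_rpow_of_nonneg (by positivity) (by norm_num), ← Real.sqrt_eq_rpow]
  exact ENNReal.ofReal_le_ofReal (Real.abs_le_sqrt sq_le)

end KullbackLeibler

section Coin

instance isProbabilityMeasure_coin : IsProbabilityMeasure coin where
  measure_univ := by simp [coin, ENNReal.inv_two_add_inv_two]

lemma map_not_coin : coin.map not = coin := by
  rw [coin, Measure.map_add _ _ .of_discrete, Measure.map_smul, Measure.map_smul,
    Measure.map_dirac' .of_discrete, Measure.map_dirac' .of_discrete, Bool.not_true,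
    Bool.not_false, add_comm]

lemma integral_prod_coin_eq_zero_of_odd {α : Type*} [MeasurableSpace α] (P : Measure α)
    [SFinite P] {g : α × Bool → ℝ} (hodd : ∀ a u, g (a, !u) = -g (a, u)) :
    ∫ v, g v ∂(P.prod coin) = 0 := by
  let flip : α × Bool ≃ᵐ α × Bool :=
    (MeasurableEquiv.refl α).prodCongr ⟨Equiv.boolNot, .of_discrete, .of_discrete⟩
  have flip_preserves : MeasurePreserving flip (P.prod coin) (P.prod coin) :=
    (MeasurePreserving.id P).prod ⟨.of_discrete, map_not_coin⟩
  have integral_eq_neg : ∫ v, g v ∂(P.prod coin) = -∫ v, g v ∂(P.prod coin) := by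
    rw [← integral_neg, ← flip_preserves.integral_comp' g]
    exact integral_congr_ae (ae_of_all _ fun v => hodd v.1 v.2)
  linarith

end Coin

section MutualInformation

lemma hasLaw_and_hasLaw_and_indepFun_of_map_prodMk_eq_prod {Ω α β : Type*} [MeasurableSpace Ω]
    [MeasurableSpace α] [MeasurableSpace β] {μ : Measure Ω} [IsFiniteMeasure μ] {P : Measure α}
    [IsProbabilityMeasure P] {Q : Measure β} [IsProbabilityMeasure Q] {X : Ω → α}
    (hX : AEMeasurable X μ) {Y : Ω → β} (hY : AEMeasurable Y μ)
    (h : μ.map (fun ω => (X ω, Y ω)) = P.prod Q) :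
    HasLaw X P μ ∧ HasLaw Y Q μ ∧ IndepFun X Y μ := by
  have hXP : HasLaw X P μ :=
    ⟨hX, by rw [← Measure.fst_map_prodMk₀ hY, h, Measure.fst_prod]⟩
  have hYQ : HasLaw Y Q μ :=
    ⟨hY, by rw [← Measure.snd_map_prodMk₀ hX, h, Measure.snd_prod]⟩
  exact ⟨hXP, hYQ, (indepFun_iff_hasLaw_prodMk_prod hXP hYQ).2 ⟨hX.prodMk hY, h⟩⟩

lemma condDistrib_ae_eq_const_of_indepFun {Ω γ β : Type*} [MeasurableSpace Ω] [MeasurableSpace γ]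
    [MeasurableSpace β] [StandardBorelSpace β] [Nonempty β] {μ : Measure Ω} [IsFiniteMeasure μ]
    {B : Ω → β} {Z : Ω → γ} (hZ : AEMeasurable Z μ) (hB : AEMeasurable B μ)
    (h : IndepFun Z B μ) : condDistrib B Z μ =ᵐ[μ.map Z] Kernel.const γ (μ.map B) :=
  condDistrib_ae_eq_of_measure_eq_compProd Z hB <| by
    rw [h.map_prod_eq_prod_map_map hZ hB, Measure.compProd_const]

variable {Ω γ α : Type*} [MeasurableSpace Ω] [MeasurableSpace γ] [MeasurableSpace α]
  [StandardBorelSpace α] [Nonempty α] {μ : Measure Ω} {Z : Ω → γ} {A : Ω → α} {U : Ω → Bool}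

lemma ofReal_abs_integral_condDistrib_le_dCMI [IsFiniteMeasure μ] {z : γ}
    (hz : condDistrib U Z μ z = coin) {g : α × Bool → ℝ} (hg : Measurable g)
    (hg1 : ∀ v, g v ∈ Set.Icc (-1 : ℝ) 1) (hodd : ∀ a u, g (a, !u) = -g (a, u)) :
    ENNReal.ofReal |∫ v, g v ∂(condDistrib (fun ω => (A ω, U ω)) Z μ z)| ≤
      (2 * dCMI μ A U Z z) ^ (1 / 2 : ℝ) := by
  have width : ENNReal.ofReal ((1 - -1 : ℝ) ^ 2 / 2) = 2 := by norm_num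
  rw [dCMI, KL_eq_klDiv, ← width]
  refine ofReal_abs_integral_le_rpow_klDiv_of_mem_Icc (by norm_num) hg.aemeasurable
    (ae_of_all _ hg1) ?_
  rw [hz]
  exact integral_prod_coin_eq_zero_of_odd _ hodd

lemma ofReal_abs_integral_le_lintegral_dCMI [IsProbabilityMeasure μ] (hZ : AEMeasurable Z μ)
    (hA : AEMeasurable A μ) (hU : HasLaw U coin μ) (hZU : IndepFun Z U μ)
    {G : γ × (α × Bool) → ℝ} (hG : Measurable G) (hG1 : ∀ q, G q ∈ Set.Icc (-1 : ℝ) 1)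
    (hodd : ∀ z a u, G (z, (a, !u)) = -G (z, (a, u))) :
    ENNReal.ofReal |∫ ω, G (Z ω, (A ω, U ω)) ∂μ| ≤
      ∫⁻ z, (2 * dCMI μ A U Z z) ^ (1 / 2 : ℝ) ∂(μ.map Z) := by
  have hAU : AEMeasurable (fun ω => (A ω, U ω)) μ := hA.prodMk hU.aemeasurable
  have disintegrate : ∫ ω, G (Z ω, (A ω, U ω)) ∂μ =
      ∫ z, ∫ v, G (z, v) ∂(condDistrib (fun ω => (A ω, U ω)) Z μ z) ∂(μ.map Z) := by
    have := Measure.isProbabilityMeasure_map hZ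
    rw [← Measure.integral_compProd
      (.of_mem_Icc (-1) 1 hG.aemeasurable (ae_of_all _ hG1)), compProd_map_condDistrib hAU,
      integral_map (hZ.prodMk hAU) hG.aestronglyMeasurable]
  have condDistrib_eq_coin : ∀ᵐ z ∂(μ.map Z), condDistrib U Z μ z = coin := by
    filter_upwards [condDistrib_ae_eq_const_of_indepFun hZ hU.aemeasurable hZU] with z hz
    rw [hz, Kernel.const_apply, hU.map_eq]
  rw [disintegrate, ← Real.enorm_eq_ofReal_abs]
  refine (enorm_integral_le_lintegral_enorm _).trans (lintegral_mono_ae ?_)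
  filter_upwards [condDistrib_eq_coin] with z hz
  rw [Real.enorm_eq_ofReal_abs]
  exact ofReal_abs_integral_condDistrib_le_dCMI hz (hG.comp measurable_prodMk_left)
    (fun v => hG1 (z, v)) (hodd z)

end MutualInformation

section SampleGap

/-- The gap between the test loss and the training loss of a pair of examples, when the selector
`u` picks the training one. It is stated for an arbitrary loss `L` on examples, so that it applies
both to samples `(x, y)` and to labelled predictions `(f_w(x), y)`. -/
def sampleGap {β : Type*} (L : β → ℝ) (q : β × β) (u : Bool) : ℝ :=
  L (testSel q u) - L (trainSel q u)

variable {β : Type*} {L : β → ℝ}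

lemma sampleGap_comp {β' : Type*} (g : β' → β) (q : β' × β') (u : Bool) :
    sampleGap (L ∘ g) q u = sampleGap L (Prod.map g g q) u := by
  cases u <;> rfl

lemma sampleGap_not (q : β × β) (u : Bool) : sampleGap L q (!u) = -sampleGap L q u := by
  cases u <;> simp [sampleGap, testSel, trainSel]

lemma sampleGap_mem_Icc (hL : ∀ b, L b ∈ Set.Icc (0 : ℝ) 1) (q : β × β) (u : Bool) :
    sampleGap L q u ∈ Set.Icc (-1 : ℝ) 1 := by
  have := hL (testSel q u)
  have := hL (trainSel q u)
  simp only [sampleGap, Set.mem_Icc] at *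
  constructor <;> linarith

variable [MeasurableSpace β]

lemma measurable_sampleGap (hL : Measurable L) :
    Measurable fun p : (β × β) × Bool => sampleGap L p.1 p.2 :=
  measurable_from_prod_countable_left fun u => by
    cases u
    exacts [(hL.comp measurable_snd).sub (hL.comp measurable_fst),
      (hL.comp measurable_fst).sub (hL.comp measurable_snd)]

lemma integrable_sampleGap {Ω : Type*} [MeasurableSpace Ω] {μ : Measure Ω} [IsFiniteMeasure μ]
    (hL : Measurable L) (hL01 : ∀ b, L b ∈ Set.Icc (0 : ℝ) 1) {Q : Ω → β × β}
    (hQ : AEMeasurable Q μ) {U : Ω → Bool} (hU : AEMeasurable U μ) :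
    Integrable (fun ω => sampleGap L (Q ω) (U ω)) μ :=
  .of_mem_Icc (-1) 1 ((measurable_sampleGap hL).comp_aemeasurable (hQ.prodMk hU))
    (ae_of_all _ fun _ => sampleGap_mem_Icc hL01 _ _)

lemma ofReal_abs_integral_sampleGap_le_lintegral_dCMI {Ω γ α 𝒴 : Type*} [MeasurableSpace Ω]
    [MeasurableSpace γ] [MeasurableSpace α] [StandardBorelSpace α] [Nonempty α]
    [MeasurableSpace 𝒴] {μ : Measure Ω} [IsProbabilityMeasure μ] {L : α × 𝒴 → ℝ}
    (hL : Measurable L) (hL01 : ∀ b, L b ∈ Set.Icc (0 : ℝ) 1) {Z : Ω → γ} (hZ : AEMeasurable Z μ)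
    {A : Ω → α × α} (hA : AEMeasurable A μ) {Y : γ → 𝒴 × 𝒴} (hY : Measurable Y) {U : Ω → Bool}
    (hU : HasLaw U coin μ) (hZU : IndepFun Z U μ) :
    ENNReal.ofReal |∫ ω, sampleGap L
        (((A ω).1, (Y (Z ω)).1), ((A ω).2, (Y (Z ω)).2)) (U ω) ∂μ| ≤
      ∫⁻ z, (2 * dCMI μ A U Z z) ^ (1 / 2 : ℝ) ∂(μ.map Z) :=
  ofReal_abs_integral_le_lintegral_dCMI hZ hA hU hZU
    (G := fun q => sampleGap L ((q.2.1.1, (Y q.1).1), (q.2.1.2, (Y q.1).2)) q.2.2)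
    ((measurable_sampleGap hL).comp
      (f := fun q : γ × ((α × α) × Bool) =>
        (((q.2.1.1, (Y q.1).1), (q.2.1.2, (Y q.1).2)), q.2.2)) (by fun_prop))
    (fun _ => sampleGap_mem_Icc hL01 _ _)
    (fun _ _ u => sampleGap_not _ u)

end SampleGap

section Averaging

lemma ofReal_abs_integral_mul_sum_le {Ω ι : Type*} [MeasurableSpace Ω] {μ : Measure Ω}
    [Fintype ι] {g : ι → Ω → ℝ} (hg : ∀ i, Integrable (g i) μ) {c : ℝ} (hc : 0 ≤ c) :
    ENNReal.ofReal |∫ ω, c * ∑ i, g i ω ∂μ| ≤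
      ENNReal.ofReal c * ∑ i, ENNReal.ofReal |∫ ω, g i ω ∂μ| := by
  rw [integral_const_mul, integral_finsetSum _ fun i _ => hg i, abs_mul, abs_of_nonneg hc,
    ENNReal.ofReal_mul hc, ← ENNReal.ofReal_sum_of_nonneg fun _ _ => abs_nonneg _]
  gcongr
  exact Finset.abs_sum_le_sum_abs _ _

variable {γ 𝒴 : Type*} [MeasurableSpace γ] [MeasurableSpace 𝒴] [Countable 𝒴]
  [MeasurableSingletonClass 𝒴] {ρ : Measure γ} {ν : Measure 𝒴} [IsFiniteMeasure ν]

lemma lintegral_eq_lintegral_setLIntegral_fiber {Y : γ → 𝒴} (hY : Measurable Y)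
    (hρν : ρ.map Y ≪ ν) (s : γ → ℝ≥0∞) :
    ∫⁻ z, s z ∂ρ =
      ∫⁻ y, ENNReal.ofReal (ν.real {y})⁻¹ * ∫⁻ z in Y ⁻¹' {y}, s z ∂ρ ∂ν := by
  have fiber_term (y : 𝒴) : ENNReal.ofReal (ν.real {y})⁻¹ * (∫⁻ z in Y ⁻¹' {y}, s z ∂ρ) * ν {y} =
      ∫⁻ z in Y ⁻¹' {y}, s z ∂ρ := by
    rcases eq_or_ne (ν {y}) 0 with h0 | h0
    -- here `(ν.real {y})⁻¹` is the junk value `0`, harmless because the fibre is `ρ`-null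
    · have fiber_null : ρ (Y ⁻¹' {y}) = 0 := by
        rw [← Measure.map_apply hY (measurableSet_singleton y), hρν h0]
      rw [h0, mul_zero, setLIntegral_measure_zero _ _ fiber_null]
    · have mass_pos : 0 < ν.real {y} := ENNReal.toReal_pos h0 (measure_ne_top _ _)
      rw [mul_right_comm, ← ofReal_measureReal, ← ENNReal.ofReal_mul (by positivity),
        inv_mul_cancel₀ mass_pos.ne', ENNReal.ofReal_one, one_mul]
  have cover : ⋃ y, Y ⁻¹' {y} = Set.univ := by
    rw [← Set.preimage_iUnion, Set.iUnion_of_singleton, Set.preimage_univ]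
  rw [lintegral_countable' (μ := ν), tsum_congr fiber_term,
    ← lintegral_iUnion (fun y => hY (measurableSet_singleton y)) (pairwise_disjoint_fiber Y),
    cover, setLIntegral_univ]

lemma sum_lintegral_le_lintegral_sum {ι : Type*} (t : Finset ι) (s : ι → γ → ℝ≥0∞) :
    ∑ i ∈ t, ∫⁻ z, s i z ∂ρ ≤ ∫⁻ z, ∑ i ∈ t, s i z ∂ρ := by
  classical
  induction t using Finset.induction_on with
  | empty => simp
  | insert i t hi ih =>
    simp only [Finset.sum_insert hi]
    exact (add_le_add_right ih _).trans (le_lintegral_add _ _)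

lemma mul_sum_lintegral_le_lintegral_classwise [DecidableEq 𝒴] {ι : Type*} [Fintype ι]
    {Y : ι → γ → 𝒴} (hY : ∀ i, Measurable (Y i)) (hρν : ∀ i, ρ.map (Y i) ≪ ν)
    (s : ι → γ → ℝ≥0∞) {c : ℝ} (hc : 0 ≤ c) :
    ENNReal.ofReal (1 / c) * ∑ i, ∫⁻ z, s i z ∂ρ ≤
      ∫⁻ y, ∫⁻ z, ENNReal.ofReal (1 / (c * ν.real {y})) *
        ∑ i, (if Y i z = y then s i z else 0) ∂ρ ∂ν := by
  have setLIntegral_eq (i : ι) (y : 𝒴) :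
      ∫⁻ z in Y i ⁻¹' {y}, s i z ∂ρ = ∫⁻ z, (if Y i z = y then s i z else 0) ∂ρ := by
    rw [← lintegral_indicator (hY i (measurableSet_singleton y))]
    simp only [Set.indicator, Set.mem_preimage, Set.mem_singleton_iff]
  have weight_eq (y : 𝒴) : ENNReal.ofReal (1 / (c * ν.real {y})) =
      ENNReal.ofReal (1 / c) * ENNReal.ofReal (ν.real {y})⁻¹ := by
    rw [← ENNReal.ofReal_mul (by positivity), one_div, one_div, mul_inv]
  calc ENNReal.ofReal (1 / c) * ∑ i, ∫⁻ z, s i z ∂ρ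
      = ∫⁻ y, ENNReal.ofReal (1 / (c * ν.real {y})) *
          ∑ i, ∫⁻ z, (if Y i z = y then s i z else 0) ∂ρ ∂ν := by
        rw [Finset.sum_congr rfl fun i _ =>
            lintegral_eq_lintegral_setLIntegral_fiber (hY i) (hρν i) (s i),
          ← lintegral_finsetSum _ fun _ _ => .of_discrete, ← lintegral_const_mul _ .of_discrete]
        simp_rw [weight_eq, mul_assoc, ← setLIntegral_eq, Finset.mul_sum]
    _ ≤ ∫⁻ y, ENNReal.ofReal (1 / (c * ν.real {y})) *
          ∫⁻ z, ∑ i, (if Y i z = y then s i z else 0) ∂ρ ∂ν := by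
        gcongr; exact sum_lintegral_le_lintegral_sum _ _
    _ = _ := lintegral_congr fun _ => (lintegral_const_mul' _ _ ENNReal.ofReal_ne_top).symm

lemma ite_rpow_le_rpow_max_mul (p q : Prop) [Decidable p] [Decidable q] (I : ℝ≥0∞) (r : ℝ) :
    (if p then (2 * I) ^ r else 0) ≤
      (2 * max (if p then (1 : ℝ≥0∞) else 0) (if q then (1 : ℝ≥0∞) else 0) * I) ^ r := by
  split_ifs <;> simp

end Averaging

theorem standard_gen_classwise_fCMI_bound_general
    {Ω 𝒲 𝒳 𝒴 Yhat : Type*} [MeasurableSpace Ω] [MeasurableSpace 𝒲] [MeasurableSpace 𝒳]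
    [MeasurableSpace 𝒴] [Countable 𝒴] [MeasurableSingletonClass 𝒴] [DecidableEq 𝒴]
    [MeasurableSpace Yhat] [StandardBorelSpace Yhat] [Nonempty Yhat]
    (μ : Measure Ω) [IsProbabilityMeasure μ] (n : ℕ) (ν : Measure 𝒴) [IsFiniteMeasure ν]
    (Z : Ω → Fin n → (𝒳 × 𝒴) × (𝒳 × 𝒴)) (hZ : AEMeasurable Z μ)
    (hlabel : ∀ i, μ.map (fun ω => (Z ω i).1.2) ≪ ν)
    (U : Ω → Fin n → Bool) (hU : ∀ i, HasLaw (fun ω => U ω i) coin μ)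
    (hZU : ∀ i, IndepFun Z (fun ω => U ω i) μ)
    (W : Ω → 𝒲) (hW : AEMeasurable W μ)
    (f : 𝒲 → 𝒳 → Yhat) (hf : Measurable fun p : 𝒲 × 𝒳 => f p.1 p.2)
    (ℓ : Yhat → 𝒴 → ℝ) (hℓ : Measurable fun p : Yhat × 𝒴 => ℓ p.1 p.2)
    (hℓ01 : ∀ p y', ℓ p y' ∈ Set.Icc (0 : ℝ) 1) :
    ENNReal.ofReal
        |∫ ω, (1 / (n : ℝ)) *
            ∑ i, (ℓ (f (W ω) (testSel (Z ω i) (U ω i)).1) (testSel (Z ω i) (U ω i)).2 -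
                  ℓ (f (W ω) (trainSel (Z ω i) (U ω i)).1) (trainSel (Z ω i) (U ω i)).2) ∂μ|
      ≤ ∫⁻ y, (∫⁻ z, ENNReal.ofReal (1 / ((n : ℝ) * ν.real {y})) *
            ∑ i, (2 * max (if (z i).1.2 = y then (1 : ℝ≥0∞) else 0)
                          (if (z i).2.2 = y then (1 : ℝ≥0∞) else 0) *
                  dCMI μ (fun ω => (f (W ω) ((Z ω i).1.1), f (W ω) ((Z ω i).2.1)))
                    (fun ω => U ω i) Z z) ^ (1 / 2 : ℝ)
            ∂(μ.map Z))
          ∂ν := by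
  let A (i : Fin n) (ω : Ω) : Yhat × Yhat := (f (W ω) (Z ω i).1.1, f (W ω) (Z ω i).2.1)
  let labels (i : Fin n) (z : Fin n → (𝒳 × 𝒴) × (𝒳 × 𝒴)) : 𝒴 × 𝒴 := ((z i).1.2, (z i).2.2)
  let gap (i : Fin n) (ω : Ω) : ℝ := sampleGap (fun p : Yhat × 𝒴 => ℓ p.1 p.2)
    (((A i ω).1, (labels i (Z ω)).1), ((A i ω).2, (labels i (Z ω)).2)) (U ω i)
  have hlabels (i) : Measurable (labels i) := by fun_prop
  have hA (i) : AEMeasurable (A i) μ :=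
    (hf.comp_aemeasurable (hW.prodMk (by fun_prop))).prodMk
      (hf.comp_aemeasurable (hW.prodMk (by fun_prop)))
  have hgap (i) : Integrable (gap i) μ := integrable_sampleGap hℓ (fun p => hℓ01 p.1 p.2)
    (by fun_prop) (hU i).aemeasurable
  calc _ = ENNReal.ofReal |∫ ω, 1 / (n : ℝ) * ∑ i, gap i ω ∂μ| := by
        congr! 7 with ω i
        exact sampleGap_comp (L := fun p : Yhat × 𝒴 => ℓ p.1 p.2) (Prod.map (f (W ω)) id) _ _
    _ ≤ ENNReal.ofReal (1 / n) * ∑ i, ENNReal.ofReal |∫ ω, gap i ω ∂μ| :=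
        ofReal_abs_integral_mul_sum_le hgap (by positivity)
    _ ≤ ENNReal.ofReal (1 / n) * ∑ i,
          ∫⁻ z, (2 * dCMI μ (A i) (fun ω => U ω i) Z z) ^ (1 / 2 : ℝ) ∂(μ.map Z) := by
        gcongr with i
        exact ofReal_abs_integral_sampleGap_le_lintegral_dCMI hℓ (fun p => hℓ01 p.1 p.2) hZ (hA i)
          (hlabels i) (hU i) (hZU i)
    _ ≤ ∫⁻ y, ∫⁻ z, ENNReal.ofReal (1 / (n * ν.real {y})) * ∑ i, (if (z i).1.2 = y then
          (2 * dCMI μ (A i) (fun ω => U ω i) Z z) ^ (1 / 2 : ℝ) else 0) ∂(μ.map Z) ∂ν :=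
        mul_sum_lintegral_le_lintegral_classwise (fun i => (hlabels i).fst) (fun i => by
          rw [AEMeasurable.map_map_of_aemeasurable (hlabels i).fst.aemeasurable hZ]
          exact hlabel i) _ n.cast_nonneg
    _ ≤ _ := by gcongr; exact ite_rpow_le_rpow_max_mul _ _ _ _
/-- **Corollary C.3 (label-dependent f-CMI bound for the standard generalization error)**:
in the super-sample setting with predictions and a bounded loss `ℓ(f_w(x),y) ∈ [0,1]`,
the standard expected generalization error satisfies
`|gen| ≤ E_{Y'∼P_Y}[E_{Z_{[2n]}}[(1/n^{Y'}) Σ_i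
    sqrt (2 max(𝟙{Y_i⁻=Y'},𝟙{Y_i⁺=Y'}) I_{Z_{[2n]}}(f_W(X_i^±);U_i))]]`. -/
theorem standard_gen_classwise_fCMI_bound
    {Ω 𝒲 𝒳 𝒴 Yhat : Type*}
    [mΩ : MeasurableSpace Ω] [StandardBorelSpace Ω] [Nonempty Ω]
    [MeasurableSpace 𝒲] [StandardBorelSpace 𝒲] [Nonempty 𝒲]
    [MeasurableSpace 𝒳] [StandardBorelSpace 𝒳]
    [MeasurableSpace 𝒴] [Countable 𝒴] [MeasurableSingletonClass 𝒴] [DecidableEq 𝒴]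
    [MeasurableSpace Yhat] [StandardBorelSpace Yhat] [Nonempty Yhat]
    (μ : Measure Ω) [IsProbabilityMeasure μ]
    (n : ℕ) (hn : 0 < n)
    (PZ : Measure (𝒳 × 𝒴)) [IsProbabilityMeasure PZ]
    (Z : Ω → Fin n → (𝒳 × 𝒴) × (𝒳 × 𝒴)) (hZ : Measurable Z)
    (U : Ω → Fin n → Bool) (hU : Measurable U)
    (W : Ω → 𝒲) (hW : Measurable W)
    (hlaw : μ.map (fun ω => (Z ω, U ω)) =
      (Measure.pi fun _ : Fin n => PZ.prod PZ).prod (Measure.pi fun _ : Fin n => coin))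
    (hSle : MeasurableSpace.comap (fun ω (i : Fin n) => trainSel (Z ω i) (U ω i))
        inferInstance ≤ mΩ)
    (hMarkov : CondIndepFun
      (MeasurableSpace.comap (fun ω (i : Fin n) => trainSel (Z ω i) (U ω i)) inferInstance)
      hSle W (fun ω => (Z ω, U ω)) μ)
    (f : 𝒲 → 𝒳 → Yhat) (hf : Measurable fun p : 𝒲 × 𝒳 => f p.1 p.2)
    (ℓ : Yhat → 𝒴 → ℝ) (hℓ : Measurable fun p : Yhat × 𝒴 => ℓ p.1 p.2)
    (hℓ01 : ∀ p y', ℓ p y' ∈ Set.Icc (0 : ℝ) 1) :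
    ENNReal.ofReal
        |∫ ω, (1 / (n : ℝ)) *
            ∑ i, (ℓ (f (W ω) (testSel (Z ω i) (U ω i)).1) (testSel (Z ω i) (U ω i)).2 -
                  ℓ (f (W ω) (trainSel (Z ω i) (U ω i)).1) (trainSel (Z ω i) (U ω i)).2) ∂μ|
      ≤ ∫⁻ y, (∫⁻ z, ENNReal.ofReal (1 / ((n : ℝ) * (PZ (Prod.snd ⁻¹' {y})).toReal)) *
            ∑ i, (2 * max (if (z i).1.2 = y then (1 : ℝ≥0∞) else 0)
                          (if (z i).2.2 = y then (1 : ℝ≥0∞) else 0) *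
                  dCMI μ (fun ω => (f (W ω) ((Z ω i).1.1), f (W ω) ((Z ω i).2.1)))
                    (fun ω => U ω i) Z z) ^ (1 / 2 : ℝ)
            ∂(μ.map Z))
          ∂(PZ.map Prod.snd) := by
  obtain ⟨hZlaw, hUlaw, hindep⟩ :=
    hasLaw_and_hasLaw_and_indepFun_of_map_prodMk_eq_prod hZ.aemeasurable hU.aemeasurable hlaw
  have hlabel (i) : HasLaw (fun ω => (Z ω i).1.2) (PZ.map Prod.snd) μ :=
    ((measurable_snd.measurePreserving PZ).comp (measurePreserving_fst.comp
      (measurePreserving_eval (fun _ => PZ.prod PZ) i))).comp_hasLaw hZlaw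
  have hcoin (i) : HasLaw (fun ω => U ω i) coin μ :=
    (measurePreserving_eval (fun _ => coin) i).comp_hasLaw hUlaw
  simpa only [measureReal_def, Measure.map_apply measurable_snd (measurableSet_singleton _)] using
    standard_gen_classwise_fCMI_bound_general μ n (PZ.map Prod.snd) Z hZ.aemeasurable
      (fun i => (hlabel i).map_eq.absolutelyContinuous) U hcoin
      (fun i => hindep.comp measurable_id (measurable_pi_apply i)) W hW.aemeasurable f hf ℓ hℓ hℓ01
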